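/- arXiv:2001.11707 — 2 statements merged into one kernel-verified Lean document; each statement's English description precedes it below -/
import Mathlib

section
/- Let α : S → ℝ be a finitely supported function with α(s) ≥ 0 for all s and ∑ₛ α(s) = 1, and let 𝒦 be a simplicial complex over S. If there exists a face F ∈ 𝒦 with F ⊆ supp(α), then the distance from α to |𝒦|₁ (with respect to the metric d(α,β) = (1/2)∑ₛ|α(s) − β(s)|) equals the infimum, over all faces F ∈ 𝒦 with F ⊆ supp(α), of (1 − ∑_{s∈F} α(s)); if no face of 𝒦 is contained in supp(α), then this distance equals 1. -/
open scoped BigOperators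

/-- A simplicial complex over the vertex set `S`: a nonempty collection of
nonempty finite subsets of `S`, closed under taking nonempty subsets. -/
def IsSimplicialComplex {S : Type*} (K : Set (Finset S)) : Prop :=
  K.Nonempty ∧ (∀ F ∈ K, F.Nonempty) ∧
    ∀ F ∈ K, ∀ G : Finset S, G.Nonempty → G ⊆ F → G ∈ K

/-- Halved ℓ¹ distance between finitely supported real functions:
`d(α,β) = (1/2) ∑ₛ |α s - β s|`. -/
noncomputable def l1dist {S : Type*} (α β : S →₀ ℝ) : ℝ :=
  (1 / 2) * (α - β).sum fun _ x => |x|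

/-- The ℓ¹ geometric realization of a collection `K` of finite subsets of `S`:
finitely supported probability vectors whose support is a face of `K`. -/
def realization {S : Type*} (K : Set (Finset S)) : Set (S →₀ ℝ) :=
  {α | (∀ s, 0 ≤ α s) ∧ (α.sum fun _ x => x) = 1 ∧ α.support ∈ K}

/-- Distance from a point to a set of finitely supported functions. -/
noncomputable def distToSet {S : Type*} (α : S →₀ ℝ) (X : Set (S →₀ ℝ)) : ℝ :=
  sInf (l1dist α '' X)

/-- One-sided Hausdorff distance between (the realizations of) two complexes. -/
noncomputable def hdelta {S : Type*} (K₁ K₂ : Set (Finset S)) : ℝ :=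
  sSup ((fun α => distToSet α (realization K₂)) '' realization K₁)

/-- Hausdorff distance between (the realizations of) two simplicial complexes. -/
noncomputable def hdist {S : Type*} (K₁ K₂ : Set (Finset S)) : ℝ :=
  max (hdelta K₁ K₂) (hdelta K₂ K₁)

/-- `d(F, K)`: supremum of distances to `|K|₁` over probability vectors
supported exactly on `F`. -/
noncomputable def dFace {S : Type*} (F : Finset S) (K : Set (Finset S)) : ℝ :=
  sSup ((fun α => distToSet α (realization K)) ''
    {α : S →₀ ℝ | (∀ s, 0 ≤ α s) ∧ (α.sum fun _ x => x) = 1 ∧ α.support = F})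

/-- The `n`-skeleton of a simplicial complex. -/
def skeleton {S : Type*} (n : ℕ) (K : Set (Finset S)) : Set (Finset S) :=
  {F | F ∈ K ∧ F.card ≤ n + 1}

/-!
For probability vectors, `d(α, β) = 1 - ∑ₛ min (α s) (β s)`, and the sum may be restricted to
`G = supp α ∩ supp β`. Hence `d(α, β) ≥ 1 - ∑_{s ∈ G} α s`, and for `β` in the realization `G` is
either empty, in which case the distance is `1`, or again a face. Conversely, for a face
`F ⊆ supp α`, restricting `α` to `F` and rescaling to mass `1` gives a point of the realization
that dominates `α` on `F`, hence lies at distance exactly `1 - ∑_{s ∈ F} α s`.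
-/

lemma l1dist_eq_half_add_sub_sum_inf {S : Type*} (α β : S →₀ ℝ) :
    l1dist α β = (1 / 2) * ((α.sum fun _ x => x) + β.sum fun _ x => x) -
      (α ⊓ β).sum fun _ x => x := by
  classical
  have hinf : (α ⊓ β).support ⊆ α.support ∪ β.support := by
    rw [← Finsupp.support_inf_union_support_sup]
    exact Finset.subset_union_left
  have hpointwise (s : S) : |(α - β) s| = α s + β s - 2 * (α ⊓ β) s := by
    have := two_nsmul_inf_eq_add_sub_abs_sub (β s) (α s)
    rw [two_nsmul, inf_comm] at this
    rw [Finsupp.sub_apply, Finsupp.inf_apply]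
    linarith
  rw [l1dist, Finsupp.sum_of_support_subset (α - β) Finsupp.support_sub _ (by simp),
    Finsupp.sum_of_support_subset α (s := α.support ∪ β.support)
      Finset.subset_union_left _ (by simp),
    Finsupp.sum_of_support_subset β (s := α.support ∪ β.support)
      Finset.subset_union_right _ (by simp),
    Finsupp.sum_of_support_subset (α ⊓ β) hinf _ (by simp)]
  simp only [hpointwise, Finset.sum_sub_distrib, Finset.sum_add_distrib, ← Finset.mul_sum]
  ring

section Nonneg

variable {S : Type*} {α β : S →₀ ℝ}

lemma support_inf_of_nonneg [DecidableEq S] (hα : ∀ s, 0 ≤ α s) (hβ : ∀ s, 0 ≤ β s) :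
    (α ⊓ β).support = α.support ∩ β.support := by
  ext s
  have := hα s
  have := hβ s
  simp only [Finsupp.mem_support_iff, Finsupp.inf_apply, Finset.mem_inter]
  grind

lemma l1dist_eq_one_sub_sum_min [DecidableEq S]
    (hα : ∀ s, 0 ≤ α s) (hα₁ : (α.sum fun _ x => x) = 1)
    (hβ : ∀ s, 0 ≤ β s) (hβ₁ : (β.sum fun _ x => x) = 1) :
    l1dist α β = 1 - ∑ s ∈ α.support ∩ β.support, min (α s) (β s) := by
  rw [l1dist_eq_half_add_sub_sum_inf, hα₁, hβ₁, Finsupp.sum, support_inf_of_nonneg hα hβ]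
  norm_num

lemma one_sub_sum_support_inter_le_l1dist [DecidableEq S]
    (hα : ∀ s, 0 ≤ α s) (hα₁ : (α.sum fun _ x => x) = 1)
    (hβ : ∀ s, 0 ≤ β s) (hβ₁ : (β.sum fun _ x => x) = 1) :
    1 - ∑ s ∈ α.support ∩ β.support, α s ≤ l1dist α β := by
  rw [l1dist_eq_one_sub_sum_min hα hα₁ hβ hβ₁]
  gcongr
  exact min_le_left _ _

lemma l1dist_eq_one_of_disjoint_support
    (hα : ∀ s, 0 ≤ α s) (hα₁ : (α.sum fun _ x => x) = 1)
    (hβ : ∀ s, 0 ≤ β s) (hβ₁ : (β.sum fun _ x => x) = 1)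
    (h : Disjoint α.support β.support) : l1dist α β = 1 := by
  classical
  rw [l1dist_eq_one_sub_sum_min hα hα₁ hβ hβ₁, Finset.disjoint_iff_inter_eq_empty.mp h,
    Finset.sum_empty, sub_zero]

end Nonneg

open Classical in
/-- The conditional distribution of `α` given `F`: restrict `α` to `F` and rescale to total
mass `1`. It is the point of the simplex on `F` used to approximate `α`. If `α` has mass `0` on
`F`, this is the zero function, since `0⁻¹ = 0`. -/
noncomputable def normalizedRestriction {S : Type*} (α : S →₀ ℝ) (F : Finset S) : S →₀ ℝ :=
  (∑ s ∈ F, α s)⁻¹ • α.filter (· ∈ F)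

section NormalizedRestriction

variable {S : Type*} {α : S →₀ ℝ} {F : Finset S}

lemma normalizedRestriction_apply_of_mem {s : S} (hs : s ∈ F) :
    normalizedRestriction α F s = (∑ t ∈ F, α t)⁻¹ * α s := by
  classical
  rw [normalizedRestriction, Finsupp.smul_apply, Finsupp.filter_apply_pos _ _ hs, smul_eq_mul]

lemma normalizedRestriction_nonneg (hα : ∀ s, 0 ≤ α s) (s : S) :
    0 ≤ normalizedRestriction α F s := by
  rw [normalizedRestriction, Finsupp.smul_apply, Finsupp.filter_apply]
  have hF : 0 ≤ ∑ t ∈ F, α t := Finset.sum_nonneg fun t _ => hα t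
  have hs := hα s
  split_ifs <;> positivity

lemma support_normalizedRestriction (hF : F ⊆ α.support) (hpos : ∑ s ∈ F, α s ≠ 0) :
    (normalizedRestriction α F).support = F := by
  classical
  rw [normalizedRestriction, Finsupp.support_smul_eq (inv_ne_zero hpos), Finsupp.support_filter,
    Finset.filter_mem_eq_inter, Finset.inter_eq_right.mpr hF]

lemma sum_normalizedRestriction (hF : F ⊆ α.support) (hpos : ∑ s ∈ F, α s ≠ 0) :
    ((normalizedRestriction α F).sum fun _ x => x) = 1 := by
  rw [Finsupp.sum, support_normalizedRestriction hF hpos,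
    Finset.sum_congr rfl fun s hs => normalizedRestriction_apply_of_mem hs, ← Finset.mul_sum,
    inv_mul_cancel₀ hpos]

lemma l1dist_normalizedRestriction (hα : ∀ s, 0 ≤ α s) (hα₁ : (α.sum fun _ x => x) = 1)
    (hF : F ⊆ α.support) (hpos : 0 < ∑ s ∈ F, α s) :
    l1dist α (normalizedRestriction α F) = 1 - ∑ s ∈ F, α s := by
  classical
  have hmass : ∑ s ∈ F, α s ≤ 1 :=
    hα₁ ▸ Finset.sum_le_sum_of_subset_of_nonneg hF fun s _ _ => hα s
  have hle : ∀ s ∈ F, α s ≤ normalizedRestriction α F s := fun s hs => by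
    rw [normalizedRestriction_apply_of_mem hs]
    exact le_mul_of_one_le_left (hα s) ((one_le_inv₀ hpos).mpr hmass)
  rw [l1dist_eq_one_sub_sum_min hα hα₁ (normalizedRestriction_nonneg hα)
      (sum_normalizedRestriction hF hpos.ne'),
    support_normalizedRestriction hF hpos.ne', Finset.inter_eq_right.mpr hF,
    Finset.sum_congr rfl fun s hs => min_eq_left (hle s hs)]

end NormalizedRestriction

section Realization

variable {S : Type*} {K : Set (Finset S)} {α β : S →₀ ℝ}

lemma realization_nonempty (hK : IsSimplicialComplex K) : (realization K).Nonempty := by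
  obtain ⟨⟨F, hF⟩, hne, hdown⟩ := hK
  obtain ⟨a, ha⟩ := hne F hF
  have hvertex : {a} ∈ K :=
    hdown F hF {a} (Finset.singleton_nonempty a) (Finset.singleton_subset_iff.mpr ha)
  refine ⟨Finsupp.single a 1, fun s => ?_, Finsupp.sum_single_index rfl, ?_⟩
  · exact Finsupp.single_nonneg.mpr zero_le_one s
  · rwa [Finsupp.support_single a one_ne_zero]

lemma support_inter_mem_of_not_disjoint [DecidableEq S] (hK : IsSimplicialComplex K)
    (hβ : β ∈ realization K) (h : ¬ Disjoint α.support β.support) :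
    α.support ∩ β.support ∈ K :=
  hK.2.2 β.support hβ.2.2 _ (Finset.not_disjoint_iff_nonempty_inter.mp h)
    Finset.inter_subset_right

lemma exists_face_one_sub_sum_le_l1dist (hK : IsSimplicialComplex K)
    (hα : ∀ s, 0 ≤ α s) (hα₁ : (α.sum fun _ x => x) = 1)
    (hface : ∃ F ∈ K, F ⊆ α.support) (hβ : β ∈ realization K) :
    ∃ F ∈ K, F ⊆ α.support ∧ 1 - ∑ s ∈ F, α s ≤ l1dist α β := by
  classical
  by_cases hdisj : Disjoint α.support β.support
  · obtain ⟨F, hF, hFα⟩ := hface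
    refine ⟨F, hF, hFα, ?_⟩
    rw [l1dist_eq_one_of_disjoint_support hα hα₁ hβ.1 hβ.2.1 hdisj]
    exact sub_le_self 1 (Finset.sum_nonneg fun s _ => hα s)
  · exact ⟨α.support ∩ β.support, support_inter_mem_of_not_disjoint hK hβ hdisj,
      Finset.inter_subset_left, one_sub_sum_support_inter_le_l1dist hα hα₁ hβ.1 hβ.2.1⟩

lemma exists_mem_realization_l1dist_eq (hα : ∀ s, 0 ≤ α s) (hα₁ : (α.sum fun _ x => x) = 1)
    {F : Finset S} (hF : F ∈ K) (hne : F.Nonempty) (hFα : F ⊆ α.support) :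
    ∃ β ∈ realization K, l1dist α β = 1 - ∑ s ∈ F, α s := by
  have hpos : 0 < ∑ s ∈ F, α s := Finset.sum_pos
    (fun s hs => (hα s).lt_of_ne' (Finsupp.mem_support_iff.mp (hFα hs))) hne
  refine ⟨normalizedRestriction α F, ⟨normalizedRestriction_nonneg hα,
    sum_normalizedRestriction hFα hpos.ne', ?_⟩, l1dist_normalizedRestriction hα hα₁ hFα hpos⟩
  rwa [support_normalizedRestriction hFα hpos.ne']

lemma l1dist_eq_one_of_not_exists_face_subset (hK : IsSimplicialComplex K)
    (hα : ∀ s, 0 ≤ α s) (hα₁ : (α.sum fun _ x => x) = 1)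
    (hface : ¬ ∃ F ∈ K, F ⊆ α.support) (hβ : β ∈ realization K) : l1dist α β = 1 := by
  classical
  refine l1dist_eq_one_of_disjoint_support hα hα₁ hβ.1 hβ.2.1 ?_
  by_contra hdisj
  exact hface ⟨_, support_inter_mem_of_not_disjoint hK hβ hdisj, Finset.inter_subset_left⟩

end Realization

/-- Distance from a probability vector `α` to the realization of a complex `K`:
if some face of `K` is contained in `supp α`, the distance is the infimum of
`1 - ∑_{s ∈ F} α s` over faces `F ⊆ supp α`; otherwise it is `1`. -/
theorem stmt2 {S : Type*} (K : Set (Finset S)) (hK : IsSimplicialComplex K)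
    (α : S →₀ ℝ) (h0 : ∀ s, 0 ≤ α s) (h1 : (α.sum fun _ x => x) = 1) :
    ((∃ F ∈ K, F ⊆ α.support) →
        distToSet α (realization K) =
          sInf {x : ℝ | ∃ F ∈ K, F ⊆ α.support ∧ x = 1 - ∑ s ∈ F, α s}) ∧
    ((¬ ∃ F ∈ K, F ⊆ α.support) → distToSet α (realization K) = 1) := by
  constructor
  · intro hface
    refine csInf_eq_csInf_of_forall_exists_le ?_ ?_
    · rintro _ ⟨β, hβ, rfl⟩
      obtain ⟨F, hF, hFα, hle⟩ := exists_face_one_sub_sum_le_l1dist hK h0 h1 hface hβ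
      exact ⟨_, ⟨F, hF, hFα, rfl⟩, hle⟩
    · rintro _ ⟨F, hF, hFα, rfl⟩
      obtain ⟨β, hβ, hdist⟩ := exists_mem_realization_l1dist_eq h0 h1 hF (hK.2.1 F hF) hFα
      exact ⟨_, ⟨β, hβ, rfl⟩, hdist.le⟩
  · intro hface
    have himage : l1dist α '' realization K = {1} :=
      ((realization_nonempty hK).image _).subset_singleton_iff.mp <| Set.image_subset_iff.mpr
        fun _ hβ => l1dist_eq_one_of_not_exists_face_subset hK h0 h1 hface hβ
    rw [distToSet, himage, csInf_singleton]
end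

section
/- Let 𝒦₁, 𝒦₂ be simplicial complexes over S. If the vertex sets ⋃𝒦₁ and ⋃𝒦₂ are not equal, then d(𝒦₁, 𝒦₂) = 1. -/
open scoped BigOperators

/-!
Two probability vectors are at halved ℓ¹ distance at most `1`, so the Hausdorff distance never
exceeds `1`. Conversely the coordinates of `α - β` sum to zero, so the coordinate at `v` is
balanced by the others and the halved ℓ¹ distance is at least `|α v - β v|`. If `v` is a vertex
of one complex only, its Dirac mass is therefore at distance at least `1` from every point of the
realization of the other.
-/

section FiniteSums

variable {ι G : Type*} [AddCommGroup G] [LinearOrder G] [IsOrderedAddMonoid G]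

theorem two_nsmul_abs_le_sum_abs_of_sum_eq_zero {T : Finset ι} {f : ι → G} {i : ι}
    (hi : i ∈ T) (hf : ∑ j ∈ T, f j = 0) : 2 • |f i| ≤ ∑ j ∈ T, |f j| := by
  classical
  have balance : f i = -∑ j ∈ T.erase i, f j :=
    eq_neg_of_add_eq_zero_left ((Finset.add_sum_erase T f hi).trans hf)
  have le_rest : |f i| ≤ ∑ j ∈ T.erase i, |f j| := by
    rw [balance, abs_neg]
    exact Finset.abs_sum_le_sum_abs _ _
  calc 2 • |f i| = |f i| + |f i| := two_nsmul _
    _ ≤ |f i| + ∑ j ∈ T.erase i, |f j| := by gcongr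
    _ = ∑ j ∈ T, |f j| := Finset.add_sum_erase T (fun j => |f j|) hi

end FiniteSums

section Distance

variable {S : Type*} {α β : S →₀ ℝ}

theorem l1dist_eq_sum {T : Finset S} (hα : α.support ⊆ T) (hβ : β.support ⊆ T) :
    l1dist α β = (1 / 2) * ∑ s ∈ T, |α s - β s| := by
  classical
  have support_sub_subset : (α - β).support ⊆ T :=
    Finsupp.support_sub.trans (Finset.union_subset hα hβ)
  rw [l1dist, Finsupp.sum_of_support_subset _ support_sub_subset _ fun _ _ => abs_zero]
  simp only [Finsupp.sub_apply]

theorem l1dist_nonneg (α β : S →₀ ℝ) : 0 ≤ l1dist α β :=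
  mul_nonneg one_half_pos.le (Finset.sum_nonneg fun _ _ => abs_nonneg _)

theorem l1dist_le_half_add_sum (hα : ∀ s, 0 ≤ α s) (hβ : ∀ s, 0 ≤ β s) :
    l1dist α β ≤ (1 / 2) * ((α.sum fun _ x => x) + β.sum fun _ x => x) := by
  classical
  have hαT := Finset.subset_union_left (s₁ := α.support) (s₂ := β.support)
  have hβT := Finset.subset_union_right (s₁ := α.support) (s₂ := β.support)
  rw [l1dist_eq_sum hαT hβT, Finsupp.sum_of_support_subset α hαT _ fun _ _ => rfl,
    Finsupp.sum_of_support_subset β hβT _ fun _ _ => rfl, ← Finset.sum_add_distrib]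
  gcongr with s
  calc |α s - β s| ≤ |α s| + |β s| := abs_sub _ _
    _ = α s + β s := by rw [abs_of_nonneg (hα s), abs_of_nonneg (hβ s)]

theorem abs_sub_apply_le_l1dist (h : (α.sum fun _ x => x) = β.sum fun _ x => x) (v : S) :
    |α v - β v| ≤ l1dist α β := by
  classical
  set T := insert v (α.support ∪ β.support)
  have hαT : α.support ⊆ T := Finset.subset_union_left.trans (Finset.subset_insert _ _)
  have hβT : β.support ⊆ T := Finset.subset_union_right.trans (Finset.subset_insert _ _)
  have sum_sub_eq_zero : ∑ s ∈ T, (α s - β s) = 0 := by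
    rw [Finset.sum_sub_distrib, sub_eq_zero]
    rwa [Finsupp.sum_of_support_subset α hαT _ fun _ _ => rfl,
      Finsupp.sum_of_support_subset β hβT _ fun _ _ => rfl] at h
  have two_mul_le :=
    two_nsmul_abs_le_sum_abs_of_sum_eq_zero (Finset.mem_insert_self v _) sum_sub_eq_zero
  rw [nsmul_eq_mul, Nat.cast_ofNat] at two_mul_le
  rw [l1dist_eq_sum hαT hβT]
  linarith

theorem distToSet_le_l1dist {X : Set (S →₀ ℝ)} (hβ : β ∈ X) : distToSet α X ≤ l1dist α β :=
  csInf_le ⟨0, Set.forall_mem_image.2 fun γ _ => l1dist_nonneg α γ⟩ (Set.mem_image_of_mem _ hβ)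

theorem le_distToSet {X : Set (S →₀ ℝ)} (hX : X.Nonempty) {r : ℝ}
    (h : ∀ β ∈ X, r ≤ l1dist α β) : r ≤ distToSet α X :=
  le_csInf (hX.image _) (Set.forall_mem_image.2 h)

end Distance

section Realization

variable {S : Type*} {K L : Set (Finset S)} {α β : S →₀ ℝ} {v : S}

theorem single_one_mem_realization (hv : {v} ∈ K) : Finsupp.single v (1 : ℝ) ∈ realization K := by
  refine ⟨Finsupp.single_nonneg.2 zero_le_one, Finsupp.sum_single_index rfl, ?_⟩
  rwa [Finsupp.support_single v one_ne_zero]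

theorem apply_eq_zero_of_mem_realization (hβ : β ∈ realization L)
    (hv : v ∉ ⋃ F ∈ L, (F : Set S)) : β v = 0 :=
  Finsupp.notMem_support_iff.1 fun hvβ => hv (Set.mem_biUnion hβ.2.2 hvβ)

theorem l1dist_le_one (hα : α ∈ realization K) (hβ : β ∈ realization L) : l1dist α β ≤ 1 := by
  have half_bound := l1dist_le_half_add_sum hα.1 hβ.1
  rw [hα.2.1, hβ.2.1] at half_bound
  linarith

theorem distToSet_realization_le_one (hα : α ∈ realization K) (hL : (realization L).Nonempty) :
    distToSet α (realization L) ≤ 1 :=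
  let ⟨_, hβ⟩ := hL
  (distToSet_le_l1dist hβ).trans (l1dist_le_one hα hβ)

theorem apply_le_distToSet_realization (hα : (α.sum fun _ x => x) = 1)
    (hL : (realization L).Nonempty) (hv : v ∉ ⋃ F ∈ L, (F : Set S)) :
    α v ≤ distToSet α (realization L) := by
  refine le_distToSet hL fun β hβ => ?_
  calc α v = α v - β v := by rw [apply_eq_zero_of_mem_realization hβ hv, sub_zero]
    _ ≤ |α v - β v| := le_abs_self _
    _ ≤ l1dist α β := abs_sub_apply_le_l1dist (hα.trans hβ.2.1.symm) v

theorem hdelta_le_one (hL : (realization L).Nonempty) : hdelta K L ≤ 1 :=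
  Real.sSup_le (Set.forall_mem_image.2 fun _ hα => distToSet_realization_le_one hα hL) zero_le_one

theorem distToSet_le_hdelta (hα : α ∈ realization K) (hL : (realization L).Nonempty) :
    distToSet α (realization L) ≤ hdelta K L :=
  le_csSup ⟨1, Set.forall_mem_image.2 fun _ hγ => distToSet_realization_le_one hγ hL⟩
    (Set.mem_image_of_mem _ hα)

theorem one_le_hdelta_of_singleton_mem (hvK : {v} ∈ K) (hL : (realization L).Nonempty)
    (hvL : v ∉ ⋃ F ∈ L, (F : Set S)) : 1 ≤ hdelta K L := by
  have dirac_mem := single_one_mem_realization hvK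
  calc (1 : ℝ) = Finsupp.single v (1 : ℝ) v := Finsupp.single_eq_same.symm
    _ ≤ distToSet (Finsupp.single v 1) (realization L) :=
      apply_le_distToSet_realization dirac_mem.2.1 hL hvL
    _ ≤ hdelta K L := distToSet_le_hdelta dirac_mem hL

end Realization

namespace IsSimplicialComplex

variable {S : Type*} {K L : Set (Finset S)}

theorem singleton_mem (hK : IsSimplicialComplex K) {F : Finset S} (hF : F ∈ K) {v : S}
    (hv : v ∈ F) : {v} ∈ K :=
  hK.2.2 F hF {v} (Finset.singleton_nonempty v) (Finset.singleton_subset_iff.2 hv)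

theorem realization_nonempty (hK : IsSimplicialComplex K) : (realization K).Nonempty := by
  obtain ⟨F, hF⟩ := hK.1
  obtain ⟨v, hv⟩ := hK.2.1 F hF
  exact ⟨_, single_one_mem_realization (hK.singleton_mem hF hv)⟩

theorem one_le_hdelta_of_not_subset (hK : IsSimplicialComplex K) (hL : (realization L).Nonempty)
    (h : ¬(⋃ F ∈ K, (F : Set S)) ⊆ ⋃ F ∈ L, (F : Set S)) : 1 ≤ hdelta K L := by
  obtain ⟨v, hvK, hvL⟩ := Set.not_subset.1 h
  obtain ⟨F, hF, hvF⟩ := Set.mem_iUnion₂.1 hvK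
  exact one_le_hdelta_of_singleton_mem (hK.singleton_mem hF hvF) hL hvL

end IsSimplicialComplex

/-- If two simplicial complexes have different vertex sets, then their
Hausdorff distance is `1`. -/
theorem stmt6 {S : Type*} (K₁ K₂ : Set (Finset S))
    (h1 : IsSimplicialComplex K₁) (h2 : IsSimplicialComplex K₂)
    (hvert : (⋃ F ∈ K₁, (F : Set S)) ≠ ⋃ F ∈ K₂, (F : Set S)) :
    hdist K₁ K₂ = 1 := by
  have hne₁ := h1.realization_nonempty
  have hne₂ := h2.realization_nonempty
  refine le_antisymm (max_le (hdelta_le_one hne₂) (hdelta_le_one hne₁)) (le_max_iff.2 ?_)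
  exact hvert.not_le_or_not_ge.imp (h1.one_le_hdelta_of_not_subset hne₂)
    (h2.one_le_hdelta_of_not_subset hne₁)
end
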